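/- For every κ ∈ (0,1) there exists a constant d_κ > 0 with the following property. Let c be a complete curve of constant geodesic curvature κ in ℍ², and γ a complete geodesic contained in the non-mean-convex side of c. Let γ' be the unique geodesic orthogonal to both γ and c, and in the half-plane bounded by γ not containing c, let γ₁ and γ₂ be the two geodesic rays from a common point p ∈ γ', orthogonal at p, ending at the two ideal endpoints of γ. Then d(c, γ₁ ∪ γ₂) ≥ d(c, γ) + d_κ. -/

import Mathlib

open Metric

/-- The inverse hyperbolic tangent. -/
noncomputable def artanh (x : ℝ) : ℝ := Real.log ((1 + x) / (1 - x)) / 2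

/-- A complete geodesic of the hyperbolic plane, as a subset: the range of an
isometric embedding of `ℝ`. -/
def IsGeodesicLine (G : Set UpperHalfPlane) : Prop :=
  ∃ g : ℝ → UpperHalfPlane, Isometry g ∧ Set.range g = G

/-- A geodesic ray issued from `p`: an arclength parametrization `f` of a half-line
with `f 0 = p`. -/
def IsRayFrom (f : ℝ → UpperHalfPlane) (p : UpperHalfPlane) : Prop :=
  f 0 = p ∧ ∀ s t : ℝ, 0 ≤ s → 0 ≤ t → dist (f s) (f t) = |s - t|

/-- The Lorentz form of signature `(1, 2)` on `ℝ³`. -/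
def lorentz (x y : ℝ × ℝ × ℝ) : ℝ := x.1 * y.1 - x.2.1 * y.2.1 - x.2.2 * y.2.2

lemma lorentz_comm (x y : ℝ × ℝ × ℝ) : lorentz x y = lorentz y x := by
  simp only [lorentz]; ring

lemma lorentz_add_left (x y z : ℝ × ℝ × ℝ) :
    lorentz (x + y) z = lorentz x z + lorentz y z := by
  simp only [lorentz, Prod.fst_add, Prod.snd_add]; ring

lemma lorentz_sub_left (x y z : ℝ × ℝ × ℝ) :
    lorentz (x - y) z = lorentz x z - lorentz y z := by
  simp only [lorentz, Prod.fst_sub, Prod.snd_sub]; ring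

lemma lorentz_smul_left (r : ℝ) (x z : ℝ × ℝ × ℝ) :
    lorentz (r • x) z = r * lorentz x z := by
  simp only [lorentz, Prod.smul_fst, Prod.smul_snd, smul_eq_mul]; ring

lemma lorentz_add_right (x y z : ℝ × ℝ × ℝ) :
    lorentz z (x + y) = lorentz z x + lorentz z y := by
  simp only [lorentz, Prod.fst_add, Prod.snd_add]; ring

lemma lorentz_sub_right (x y z : ℝ × ℝ × ℝ) :
    lorentz z (x - y) = lorentz z x - lorentz z y := by
  simp only [lorentz, Prod.fst_sub, Prod.snd_sub]; ring

lemma lorentz_smul_right (r : ℝ) (x z : ℝ × ℝ × ℝ) :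
    lorentz z (r • x) = r * lorentz z x := by
  simp only [lorentz, Prod.smul_fst, Prod.smul_snd, smul_eq_mul]; ring

lemma lorentz_neg_right (x z : ℝ × ℝ × ℝ) : lorentz z (-x) = -lorentz z x := by
  simp only [lorentz, Prod.fst_neg, Prod.snd_neg]; ring

/-- The orthogonal complement of a unit timelike vector is negative. -/
lemma sq_mul_lorentz_self_le {q u : ℝ × ℝ × ℝ} (hq : lorentz q q = 1) (hu : lorentz q u = 0) :
    q.1 ^ 2 * lorentz u u ≤ -(u.2.1 ^ 2 + u.2.2 ^ 2) := by
  simp only [lorentz] at *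
  have h1 : q.1 * u.1 = q.2.1 * u.2.1 + q.2.2 * u.2.2 := by linarith
  have h2 : q.1 ^ 2 * u.1 ^ 2 = (q.2.1 * u.2.1 + q.2.2 * u.2.2) ^ 2 := by rw [← h1]; ring
  have h3 : q.1 ^ 2 = 1 + q.2.1 ^ 2 + q.2.2 ^ 2 := by linarith
  have h4 : q.1 ^ 2 * (u.2.1 ^ 2 + u.2.2 ^ 2) =
      (1 + q.2.1 ^ 2 + q.2.2 ^ 2) * (u.2.1 ^ 2 + u.2.2 ^ 2) := by rw [h3]
  nlinarith [sq_nonneg (q.2.1 * u.2.2 - q.2.2 * u.2.1)]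

lemma one_le_fst_sq {q : ℝ × ℝ × ℝ} (hq : lorentz q q = 1) : 1 ≤ q.1 ^ 2 := by
  simp only [lorentz] at hq
  nlinarith [sq_nonneg q.2.1, sq_nonneg q.2.2]

lemma lorentz_self_nonpos {q u : ℝ × ℝ × ℝ} (hq : lorentz q q = 1) (hu : lorentz q u = 0) :
    lorentz u u ≤ 0 := by
  have h1 := sq_mul_lorentz_self_le hq hu
  have h2 := one_le_fst_sq hq
  by_contra! h
  nlinarith [sq_nonneg u.2.1, sq_nonneg u.2.2]

lemma eq_zero_of_lorentz_self_eq_zero {q u : ℝ × ℝ × ℝ} (hq : lorentz q q = 1)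
    (hu : lorentz q u = 0) (h : lorentz u u = 0) : u = 0 := by
  have h1 := sq_mul_lorentz_self_le hq hu
  rw [h] at h1
  have h2 : u.2.1 = 0 := by nlinarith [sq_nonneg u.2.1, sq_nonneg u.2.2]
  have h3 : u.2.2 = 0 := by nlinarith [sq_nonneg u.2.1, sq_nonneg u.2.2]
  have h4 : u.1 = 0 := by simpa [lorentz, h2, h3] using h
  exact Prod.ext h4 (Prod.ext h2 h3)

lemma lorentz_sq_le {z q n : ℝ × ℝ × ℝ} (hz : lorentz z z = 1) (hq : lorentz q q = 1)
    (hqn : lorentz q n = 0) (hn : lorentz n n = -1) :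
    lorentz z n ^ 2 ≤ lorentz z q ^ 2 - 1 := by
  have h := lorentz_self_nonpos (u := z - lorentz z q • q + lorentz z n • n) hq (by
    simp only [lorentz_add_right, lorentz_sub_right, lorentz_smul_right, hq, hqn,
      lorentz_comm q z]
    ring)
  simp only [lorentz_add_right, lorentz_sub_right, lorentz_smul_right, lorentz_add_left,
    lorentz_sub_left, lorentz_smul_left, hq, hqn, hn, hz, lorentz_comm q z, lorentz_comm n z,
    lorentz_comm n q] at h
  nlinarith

/-- An orthonormal frame of the Lorentz form: `w` is timelike, `v` and `n` are spacelike. -/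
structure IsLorentzFrame (w v n : ℝ × ℝ × ℝ) : Prop where
  ww : lorentz w w = 1
  vv : lorentz v v = -1
  nn : lorentz n n = -1
  wv : lorentz w v = 0
  wn : lorentz w n = 0
  vn : lorentz v n = 0

/-- The Parseval identity for the Lorentz form. -/
lemma IsLorentzFrame.lorentz_eq {w v n : ℝ × ℝ × ℝ} (h : IsLorentzFrame w v n)
    (x y : ℝ × ℝ × ℝ) :
    lorentz x y = lorentz x w * lorentz y w - lorentz x v * lorentz y v
      - lorentz x n * lorentz y n := by
  obtain ⟨ww, vv, nn, wv, wn, vn⟩ := h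
  simp only [lorentz] at ww vv nn wv wn vn
  have hm : (!![w.1, -w.2.1, -w.2.2; -v.1, v.2.1, v.2.2; -n.1, n.2.1, n.2.2] :
      Matrix (Fin 3) (Fin 3) ℝ) *
      !![w.1, v.1, n.1; w.2.1, v.2.1, n.2.1; w.2.2, v.2.2, n.2.2] = 1 := by
    ext i j
    fin_cases i <;> fin_cases j <;> simp [Matrix.mul_apply, Fin.sum_univ_three] <;> linarith
  have hm' := mul_eq_one_comm.mp hm
  have e (i j : Fin 3) := congrFun (congrFun hm' i) j
  have e00 := e 0 0
  have e01 := e 0 1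
  have e02 := e 0 2
  have e11 := e 1 1
  have e12 := e 1 2
  have e22 := e 2 2
  simp [Matrix.mul_apply, Fin.sum_univ_three] at e00 e01 e02 e11 e12 e22
  simp only [lorentz]
  linear_combination (-x.1 * y.1) * e00 - (x.1 * y.2.1 + x.2.1 * y.1) * e01
    - (x.1 * y.2.2 + x.2.2 * y.1) * e02 + x.2.1 * y.2.1 * e11
    + (x.2.1 * y.2.2 + x.2.2 * y.2.1) * e12 + x.2.2 * y.2.2 * e22

lemma exists_isLorentzFrame {w v : ℝ × ℝ × ℝ} (ww : lorentz w w = 1) (vv : lorentz v v = -1)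
    (wv : lorentz w v = 0) : ∃ n, IsLorentzFrame w v n := by
  refine ⟨(w.2.1 * v.2.2 - w.2.2 * v.2.1, -(w.2.2 * v.1 - w.1 * v.2.2),
    -(w.1 * v.2.1 - w.2.1 * v.1)), ww, vv, ?_, wv, ?_, ?_⟩
  · have h : lorentz w w * lorentz v v - lorentz w v ^ 2 = -1 := by rw [ww, vv, wv]; ring
    rw [← h]; simp only [lorentz]; ring
  · simp only [lorentz]; ring
  · simp only [lorentz]; ring

/-- The embedding of the upper half plane as the hyperboloid `lorentz x x = 1`. -/
noncomputable def toHyperboloid (z : UpperHalfPlane) : ℝ × ℝ × ℝ :=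
  ((z.re ^ 2 + z.im ^ 2 + 1) / (2 * z.im), (z.re ^ 2 + z.im ^ 2 - 1) / (2 * z.im), z.re / z.im)

lemma lorentz_toHyperboloid (z w : UpperHalfPlane) :
    lorentz (toHyperboloid z) (toHyperboloid w) = Real.cosh (dist z w) := by
  have hz := z.im_pos.ne'
  have hw := w.im_pos.ne'
  rw [UpperHalfPlane.cosh_dist, Complex.dist_eq, Complex.sq_norm, Complex.normSq_apply]
  simp only [lorentz, toHyperboloid, Complex.sub_re, Complex.sub_im,
    UpperHalfPlane.coe_re, UpperHalfPlane.coe_im]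
  field_simp
  ring

lemma lorentz_toHyperboloid_self (z : UpperHalfPlane) :
    lorentz (toHyperboloid z) (toHyperboloid z) = 1 := by
  rw [lorentz_toHyperboloid, dist_self, Real.cosh_zero]

lemma abs_lorentz_le_sinh_dist {z q : UpperHalfPlane} {n : ℝ × ℝ × ℝ}
    (hqn : lorentz (toHyperboloid q) n = 0) (hn : lorentz n n = -1) :
    |lorentz (toHyperboloid z) n| ≤ Real.sinh (dist z q) := by
  have h := lorentz_sq_le (lorentz_toHyperboloid_self z) (lorentz_toHyperboloid_self q) hqn hn
  rw [lorentz_toHyperboloid, Real.cosh_sq] at h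
  exact abs_le_of_sq_le_sq (by linarith) (Real.sinh_nonneg_iff.2 dist_nonneg)

lemma abs_lorentz_le_sinh_infDist {z : UpperHalfPlane} {G : Set UpperHalfPlane}
    {n : ℝ × ℝ × ℝ} (hG : G.Nonempty) (hGn : ∀ q ∈ G, lorentz (toHyperboloid q) n = 0)
    (hn : lorentz n n = -1) :
    |lorentz (toHyperboloid z) n| ≤ Real.sinh (infDist z G) := by
  rw [← Real.arsinh_le_arsinh, Real.arsinh_sinh, le_infDist hG]
  intro q hq
  rw [← Real.sinh_le_sinh, Real.sinh_arsinh]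
  exact abs_lorentz_le_sinh_dist (hGn q hq) hn

/-- A map into the hyperboloid that preserves distances is a hyperbola branch. -/
lemma exists_eq_cosh_smul_add_sinh_smul {f : ℝ → ℝ × ℝ × ℝ} {T : Set ℝ} (h0 : 0 ∈ T) (h1 : 1 ∈ T)
    (hf : ∀ s ∈ T, ∀ t ∈ T, lorentz (f s) (f t) = Real.cosh (s - t)) :
    ∃ v, lorentz (f 0) v = 0 ∧ lorentz v v = -1 ∧
      ∀ s ∈ T, f s = Real.cosh s • f 0 + Real.sinh s • v := by
  have hs1 : Real.sinh 1 ≠ 0 := (Real.sinh_pos_iff.2 one_pos).ne'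
  have f00 : lorentz (f 0) (f 0) = 1 := by simp [hf 0 h0 0 h0]
  have f01 : lorentz (f 0) (f 1) = Real.cosh 1 := by simp [hf 0 h0 1 h1]
  have f11 : lorentz (f 1) (f 1) = 1 := by simp [hf 1 h1 1 h1]
  have hc := Real.cosh_sq 1
  set v := (Real.sinh 1)⁻¹ • (f 1 - Real.cosh 1 • f 0) with hv
  have fv : lorentz (f 0) v = 0 := by
    simp only [hv, lorentz_smul_right, lorentz_sub_right, f00, f01]; ring
  have vv : lorentz v v = -1 := by
    simp only [hv, lorentz_smul_right, lorentz_sub_right, lorentz_smul_left, lorentz_sub_left,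
      f00, f01, f11, lorentz_comm (f 1) (f 0)]
    field_simp
    linarith
  refine ⟨v, fv, vv, fun s hs => ?_⟩
  have fs0 : lorentz (f s) (f 0) = Real.cosh s := by simp [hf s hs 0 h0]
  have fss : lorentz (f s) (f s) = 1 := by simp [hf s hs s hs]
  have fsv : lorentz (f s) v = -Real.sinh s := by
    simp only [hv, lorentz_smul_right, lorentz_sub_right, fs0, hf s hs 1 h1, Real.cosh_sub]
    field_simp
    ring
  have key := eq_zero_of_lorentz_self_eq_zero
    (u := f s - (Real.cosh s • f 0 + Real.sinh s • v)) f00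
    (by simp only [lorentz_sub_right, lorentz_add_right, lorentz_smul_right, f00, fv,
          lorentz_comm (f 0) (f s), fs0]; ring)
    (by
      simp only [lorentz_sub_right, lorentz_add_right, lorentz_smul_right, lorentz_sub_left,
        lorentz_add_left, lorentz_smul_left, f00, fv, lorentz_comm (f 0) (f s), fs0, fss, fsv,
        lorentz_comm v (f s), lorentz_comm v (f 0), vv]
      linear_combination (-1) * Real.cosh_sq s)
  exact sub_eq_zero.mp key

lemma sq_le_of_forall_le_cosh_sinh {S m n : ℝ} (hS : 0 < S)
    (h : ∀ s, S ≤ Real.cosh s * m + Real.sinh s * n) : S ^ 2 ≤ m ^ 2 - n ^ 2 := by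
  have hm : S ≤ m := by simpa using h 0
  have key (τ : ℝ) (hτ : 0 < τ) : 0 ≤ τ ^ 2 * (m + n) - 2 * S * τ + (m - n) := by
    have := h (Real.log τ)
    rw [Real.cosh_log hτ, Real.sinh_log hτ] at this
    have h2 := mul_le_mul_of_nonneg_left this hτ.le
    have h3 : τ * ((τ + τ⁻¹) / 2 * m + (τ - τ⁻¹) / 2 * n) = (τ ^ 2 * (m + n) + (m - n)) / 2 := by
      field_simp; ring
    linarith
  rcases le_or_gt (m + n) 0 with hmn | hmn
  · have hp : 0 < m - n := by linarith
    have := key ((m - n) / S) (by positivity)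
    have h3 : 2 * S * ((m - n) / S) = 2 * (m - n) := by field_simp
    have h4 := mul_nonpos_of_nonneg_of_nonpos (sq_nonneg ((m - n) / S)) hmn
    linarith
  · have h1 := mul_nonneg hmn.le (key (S / (m + n)) (by positivity))
    have h2 : (m + n) * ((S / (m + n)) ^ 2 * (m + n) - 2 * S * (S / (m + n)) + (m - n)) =
        m ^ 2 - n ^ 2 - S ^ 2 := by
      field_simp; ring
    linarith

lemma add_eq_zero_of_abs_cosh_sinh_le {α β K : ℝ}
    (h : ∀ s, 0 ≤ s → |Real.cosh s * α + Real.sinh s * β| ≤ K) : α + β = 0 := by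
  by_contra hne
  have hδ : 0 < |α + β| := abs_pos.2 hne
  have hK : 0 ≤ K := (abs_nonneg _).trans (h 0 le_rfl)
  set s := (2 * K + |α - β|) / |α + β| with hs
  have hs0 : 0 ≤ s := by positivity
  have h1 := h s hs0
  have h2 : Real.exp s * (α + β) =
      2 * (Real.cosh s * α + Real.sinh s * β) - Real.exp (-s) * (α - β) := by
    rw [Real.cosh_eq, Real.sinh_eq]; ring
  have h3 : Real.exp s * |α + β| ≤ 2 * K + |α - β| := by
    rw [← abs_of_pos (Real.exp_pos s), ← abs_mul, h2]
    refine (abs_sub _ _).trans ?_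
    rw [abs_mul, abs_mul, abs_two, abs_of_pos (Real.exp_pos _)]
    have : Real.exp (-s) * |α - β| ≤ 1 * |α - β| := by
      gcongr
      exact Real.exp_le_one_iff.2 (by linarith)
    linarith
  have h4 : s * |α + β| = 2 * K + |α - β| := by rw [hs]; field_simp
  nlinarith [Real.add_one_le_exp s]

lemma IsGeodesicLine.exists_frame {γ : Set UpperHalfPlane} (hγ : IsGeodesicLine γ)
    {w : UpperHalfPlane} (hw : w ∈ γ) :
    ∃ v, lorentz (toHyperboloid w) v = 0 ∧ lorentz v v = -1 ∧
      (∀ s : ℝ, ∃ q ∈ γ, toHyperboloid q = Real.cosh s • toHyperboloid w + Real.sinh s • v) ∧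
      ∀ q ∈ γ, ∃ s : ℝ, toHyperboloid q = Real.cosh s • toHyperboloid w + Real.sinh s • v := by
  obtain ⟨g, hg, rfl⟩ := hγ
  obtain ⟨t₀, rfl⟩ := hw
  obtain ⟨v, h1, h2, h3⟩ := exists_eq_cosh_smul_add_sinh_smul
    (f := fun s => toHyperboloid (g (s + t₀))) (Set.mem_univ 0) (Set.mem_univ 1) (by
      intro s _ t _
      rw [lorentz_toHyperboloid, hg.dist_eq, Real.dist_eq, Real.cosh_abs]
      ring_nf)
  simp only [zero_add, Set.mem_univ, true_imp_iff] at h1 h3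
  refine ⟨v, h1, h2, fun s => ⟨_, ⟨s + t₀, rfl⟩, h3 s⟩, ?_⟩
  rintro _ ⟨s, rfl⟩
  exact ⟨s - t₀, by simpa using h3 (s - t₀)⟩

lemma IsRayFrom.exists_direction {f : ℝ → UpperHalfPlane} {p : UpperHalfPlane}
    (hf : IsRayFrom f p) :
    ∃ v, lorentz (toHyperboloid p) v = 0 ∧ lorentz v v = -1 ∧
      ∀ s, 0 ≤ s → toHyperboloid (f s) = Real.cosh s • toHyperboloid p + Real.sinh s • v := by
  obtain ⟨rfl, hf⟩ := hf
  exact exists_eq_cosh_smul_add_sinh_smul (f := fun s => toHyperboloid (f s)) (T := Set.Ici 0)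
    (Set.mem_Ici.2 le_rfl) (Set.mem_Ici.2 zero_le_one) (by
      intro s hs t ht
      rw [lorentz_toHyperboloid, hf s t hs ht, Real.cosh_abs])

/-- The distance to a geodesic is the Lorentz product with a unit normal vector. -/
lemma IsGeodesicLine.exists_normal {G : Set UpperHalfPlane} (hG : IsGeodesicLine G) :
    ∃ m, lorentz m m = -1 ∧
      ∀ z, |lorentz (toHyperboloid z) m| = Real.sinh (infDist z G) := by
  have hne : G.Nonempty := by
    obtain ⟨g, -, rfl⟩ := hG
    exact Set.range_nonempty g
  obtain ⟨g, hgG⟩ := hne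
  obtain ⟨v, h1, h2, h3, h4⟩ := hG.exists_frame hgG
  obtain ⟨m, hm⟩ := exists_isLorentzFrame (lorentz_toHyperboloid_self g) h2 h1
  refine ⟨m, hm.nn, fun z => le_antisymm (abs_lorentz_le_sinh_infDist ⟨g, hgG⟩ ?_ hm.nn) ?_⟩
  · intro q hq
    obtain ⟨s, hs⟩ := h4 q hq
    simp [hs, lorentz_add_left, lorentz_smul_left, hm.wn, hm.vn]
  · have h5 := sq_le_of_forall_le_cosh_sinh (Real.cosh_pos (infDist z G))
      (m := lorentz (toHyperboloid z) (toHyperboloid g)) (n := lorentz (toHyperboloid z) v) (by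
        intro s
        obtain ⟨q, hq, hqs⟩ := h3 s
        rw [← lorentz_smul_right, ← lorentz_smul_right, ← lorentz_add_right, ← hqs,
          lorentz_toHyperboloid, Real.cosh_le_cosh, abs_of_nonneg infDist_nonneg,
          abs_of_nonneg dist_nonneg]
        exact infDist_le_dist_of_mem hq)
    have h6 := hm.lorentz_eq (toHyperboloid z) (toHyperboloid z)
    rw [lorentz_toHyperboloid_self] at h6
    rw [Real.cosh_sq] at h5
    exact (le_abs_self _).trans (sq_le_sq.mp (by linarith))

/-- In coordinates adapted to a geodesic, a point `(x, y, ν)` of the strip of half-width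
`arsinh S` around the geodesic with normal `(μ₀, μ₁, μ₂)` lies on the positive side and has its
foot at bounded distance from the origin. -/
lemma strip_point_bounds {S C E μ₀ μ₁ μ₂ x y ν : ℝ} (hS : 0 < S) (hE : 0 < E) (hC : 1 < C)
    (hCE : C ^ 2 = 1 + E ^ 2) (hμ₀ : 0 < μ₀) (hμ : S ^ 2 ≤ μ₀ ^ 2 - μ₁ ^ 2)
    (hμn : μ₀ ^ 2 - μ₁ ^ 2 - μ₂ ^ 2 = -1) (h₀ : C * μ₀ - E * μ₂ ≤ S)
    (hx : 0 < x) (hn : x ^ 2 - y ^ 2 - ν ^ 2 = 1) (hν : E ^ 2 ≤ ν ^ 2)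
    (hz : x * μ₀ - y * μ₁ - ν * μ₂ ≤ S) :
    E ≤ ν ∧ S ^ 2 / (8 * (1 + 2 * S ^ 2)) * C ≤ x - y := by
  have hSμ : S ≤ μ₀ := le_of_sq_le_sq (by nlinarith [sq_nonneg μ₁]) hμ₀.le
  have hμ₂ : 0 < μ₂ := by
    by_contra! h
    nlinarith [mul_nonneg hE.le (neg_nonneg.2 h)]
  obtain ⟨hμ1, hμ1'⟩ := abs_lt.mp (abs_lt_of_sq_lt_sq (a := μ₁) (by nlinarith) hμ₀.le)
  obtain ⟨hy, hy'⟩ := abs_lt.mp (abs_lt_of_sq_lt_sq (a := y) (by nlinarith) hx.le)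
  obtain ⟨c, hc, hcν⟩ : ∃ c : ℝ, 0 ≤ c ∧ c ^ 2 = 1 + ν ^ 2 :=
    ⟨√(1 + ν ^ 2), Real.sqrt_nonneg _, Real.sq_sqrt (by positivity)⟩
  have hCc : C ≤ c := le_of_sq_le_sq (by linarith) hc
  have hc0 : 0 < c := by linarith
  have hνc : ν ≤ c := le_of_sq_le_sq (by linarith) hc
  have hprod : (x ^ 2 - y ^ 2) * (μ₀ ^ 2 - μ₁ ^ 2) ≤ (x * μ₀ - y * μ₁) ^ 2 := by
    nlinarith [sq_nonneg (x * μ₁ - y * μ₀)]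
  have hpos : 0 ≤ x * μ₀ - y * μ₁ := by
    linear_combination (mul_nonneg (sub_nonneg.2 hy'.le) (sub_nonneg.2 hμ1.le)
      + mul_nonneg (sub_nonneg.2 hy.le) (sub_nonneg.2 hμ1'.le)) / 2
  have hS' : S < x * μ₀ - y * μ₁ := by
    refine lt_of_pow_lt_pow_left₀ 2 hpos (lt_of_lt_of_le ?_ hprod)
    nlinarith [sq_pos_of_pos hE, sq_pos_of_pos hS]
  have hνpos : 0 < ν := pos_of_mul_pos_left (by linarith : 0 < ν * μ₂) hμ₂.le
  refine ⟨le_of_sq_le_sq hν hνpos.le, ?_⟩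
  set P := μ₂ + S with hP
  have hμP : μ₀ ≤ P := by
    have hEC : E ≤ C := le_of_sq_le_sq (by linarith) (by linarith)
    have : C * μ₀ ≤ C * P := by nlinarith
    exact le_of_mul_le_mul_left this (by linarith)
  have hsum : (x + y) * (μ₀ - μ₁) ≤ 2 * c * P := by
    have h1 : 0 < (x - y) * (μ₀ + μ₁) := mul_pos (by linarith) (by linarith)
    have h2 : ν * μ₂ ≤ c * μ₂ := by gcongr
    have h3 : 1 * S ≤ c * S := by gcongr; linarith
    linear_combination h1 + 2 * hz + 2 * h2 + 2 * h3
  have hxy : 0 < x - y := by linarith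
  have hP0 : 0 < P := by linarith
  have hmain : c * (μ₀ ^ 2 - μ₁ ^ 2) ≤ 4 * P ^ 2 * (x - y) := by
    have h1 : c ^ 2 * (μ₀ ^ 2 - μ₁ ^ 2) =
        ((x + y) * (μ₀ - μ₁)) * ((x - y) * (μ₀ + μ₁)) := by
      rw [show c ^ 2 = x ^ 2 - y ^ 2 by linarith]; ring
    have h2 : ((x + y) * (μ₀ - μ₁)) * ((x - y) * (μ₀ + μ₁)) ≤
        (2 * c * P) * ((x - y) * (2 * P)) := by
      have hp : 0 ≤ μ₀ + μ₁ := by linarith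
      gcongr
      linarith
    refine le_of_mul_le_mul_left ?_ hc0
    calc c * (c * (μ₀ ^ 2 - μ₁ ^ 2)) = c ^ 2 * (μ₀ ^ 2 - μ₁ ^ 2) := by ring
      _ ≤ (2 * c * P) * ((x - y) * (2 * P)) := h1 ▸ h2
      _ = c * (4 * P ^ 2 * (x - y)) := by ring
  set Q := μ₀ ^ 2 - μ₁ ^ 2 with hQ
  have hP2 : P ^ 2 ≤ 2 * (1 + 2 * Q) := by
    linear_combination sq_nonneg (μ₂ - S) + 2 * hμ - 2 * hμn
  have hQ0 : 0 ≤ Q := (sq_nonneg S).trans hμ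
  have hfrac : S ^ 2 / (8 * (1 + 2 * S ^ 2)) ≤ Q / (8 * (1 + 2 * Q)) := by
    rw [div_le_div_iff₀ (by positivity) (by positivity)]
    nlinarith
  calc S ^ 2 / (8 * (1 + 2 * S ^ 2)) * C ≤ Q / (8 * (1 + 2 * Q)) * c := by gcongr
    _ = c * Q / (8 * (1 + 2 * Q)) := by ring
    _ ≤ x - y := by
      rw [div_le_iff₀ (by positivity)]
      linear_combination hmain + 4 * mul_le_mul_of_nonneg_right hP2 hxy.le

lemma sinh_add_log_le {D b : ℝ} (hb : 0 ≤ b) :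
    Real.sinh (D + Real.log (1 + b)) ≤ Real.sinh D + Real.cosh D * b := by
  have h1 := Real.cosh_add_sinh (Real.log (1 + b))
  rw [Real.exp_log (by linarith)] at h1
  have h2 := Real.one_le_cosh (Real.log (1 + b))
  have h3 := (Real.sinh_lt_cosh D).le
  rw [Real.sinh_add]
  linear_combination mul_nonneg (sub_nonneg.2 h3) (sub_nonneg.2 h2) + Real.cosh D * h1

lemma artanh_pos {κ : ℝ} (h0 : 0 < κ) (h1 : κ < 1) : 0 < artanh κ := by
  have h2 : 1 < (1 + κ) / (1 - κ) := by
    rw [lt_div_iff₀ (by linarith)]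
    linarith
  have := Real.log_pos h2
  unfold artanh
  positivity

/-- The coordinates of the direction of a ray from `p` that stays close to the geodesic with
normal vector `n`. -/
lemma IsRayFrom.direction_coords {f : ℝ → UpperHalfPlane} {p : UpperHalfPlane}
    {γ : Set UpperHalfPlane} {w v n u : ℝ × ℝ × ℝ} {a Cb : ℝ} (hF : IsLorentzFrame w v n)
    (hγ : γ.Nonempty) (hγn : ∀ q ∈ γ, lorentz (toHyperboloid q) n = 0)
    (hpw : lorentz (toHyperboloid p) w = Real.cosh a) (hpv : lorentz (toHyperboloid p) v = 0)
    (hpn : lorentz (toHyperboloid p) n = Real.sinh a)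
    (hpu : lorentz (toHyperboloid p) u = 0) (hu : lorentz u u = -1)
    (hf : ∀ s, 0 ≤ s → toHyperboloid (f s) = Real.cosh s • toHyperboloid p + Real.sinh s • u)
    (hCb : ∀ s : ℝ, 0 ≤ s → infDist (f s) γ ≤ Cb) :
    lorentz u n = -Real.sinh a ∧ Real.cosh a * lorentz u w = -Real.sinh a ^ 2 ∧
      (Real.cosh a * lorentz u v) ^ 2 = 1 := by
  have h1 : lorentz (toHyperboloid p) n + lorentz u n = 0 := by
    refine add_eq_zero_of_abs_cosh_sinh_le (K := Real.sinh Cb) fun s hs => ?_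
    rw [← lorentz_smul_left, ← lorentz_smul_left, ← lorentz_add_left, ← hf s hs]
    exact (abs_lorentz_le_sinh_infDist hγ hγn hF.nn).trans (Real.sinh_le_sinh.2 (hCb s hs))
  have hun : lorentz u n = -Real.sinh a := by linarith
  have h2 := hF.lorentz_eq (toHyperboloid p) u
  rw [hpu, hpw, hpv, hpn, hun] at h2
  have huw : Real.cosh a * lorentz u w = -Real.sinh a ^ 2 := by linarith
  have h3 := hF.lorentz_eq u u
  rw [hu, hun] at h3
  refine ⟨hun, huw, ?_⟩
  linear_combination (Real.cosh a * lorentz u w - Real.sinh a ^ 2) * huw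
    + Real.cosh a ^ 2 * h3 + (1 - Real.sinh a ^ 2) * Real.cosh_sq a

/-- The distance from a point on the far side of a geodesic to a ray from `p`, where `p` sees
both ends of the geodesic at a right angle. -/
lemma le_sinh_dist_ray {f : ℝ → UpperHalfPlane} {p z : UpperHalfPlane}
    {w v n u : ℝ × ℝ × ℝ} {k σ s : ℝ} (hF : IsLorentzFrame w v n) (hk : 0 < k) (hk2 : k ^ 2 = 2)
    (hσ : σ ^ 2 = 1) (hpw : lorentz (toHyperboloid p) w = k)
    (hpv : lorentz (toHyperboloid p) v = 0) (hpn : lorentz (toHyperboloid p) n = 1)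
    (hun : lorentz u n = -1) (huw : k * lorentz u w = -1) (huv : k * lorentz u v = -σ)
    (hf : toHyperboloid (f s) = Real.cosh s • toHyperboloid p + Real.sinh s • u) :
    k⁻¹ * (lorentz (toHyperboloid z) w + σ * lorentz (toHyperboloid z) v)
      - lorentz (toHyperboloid z) n ≤ Real.sinh (dist z (f s)) := by
  have huw' : lorentz u w = -k⁻¹ := by field_simp; linarith
  have huv' : lorentz u v = -σ * k⁻¹ := by field_simp; linarith
  have hki : k⁻¹ ^ 2 = 1 / 2 := by rw [inv_pow, hk2]; norm_num
  set e := k⁻¹ • (w + σ • v) - n with he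
  have hfe : lorentz (toHyperboloid (f s)) e = 0 := by
    simp only [hf, he, lorentz_add_left, lorentz_smul_left, lorentz_sub_right, lorentz_add_right,
      lorentz_smul_right, hpw, hpv, hpn, hun, huw', huv']
    have : k⁻¹ * k = 1 := inv_mul_cancel₀ hk.ne'
    linear_combination Real.cosh s * this - Real.sinh s * k⁻¹ ^ 2 * hσ - 2 * Real.sinh s * hki
  have hee : lorentz e e = -1 := by
    simp only [he, lorentz_add_left, lorentz_smul_left, lorentz_sub_left, lorentz_sub_right,
      lorentz_add_right, lorentz_smul_right, hF.ww, hF.vv, hF.nn, hF.wv, hF.wn, hF.vn,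
      lorentz_comm v w, lorentz_comm n w, lorentz_comm n v]
    linear_combination -k⁻¹ ^ 2 * hσ
  refine le_trans (le_of_eq ?_) ((le_abs_self _).trans (abs_lorentz_le_sinh_dist hfe hee))
  simp only [he, lorentz_sub_right, lorentz_add_right, lorentz_smul_right]

/-- A geodesic that stays outside the strip of half-width `r` around `G` lies on one side of `G`,
and the unit normal of `G` can be chosen to point to that side. -/
lemma IsGeodesicLine.exists_normal_toward {G γ : Set UpperHalfPlane} {w v : ℝ × ℝ × ℝ} {r : ℝ}
    (hG : IsGeodesicLine G) (hr : 0 < r)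
    (hγ_param : ∀ s : ℝ, ∃ q ∈ γ, toHyperboloid q = Real.cosh s • w + Real.sinh s • v)
    (hγG : ∀ q ∈ γ, r < infDist q G) :
    ∃ m, lorentz m m = -1 ∧ 0 < lorentz w m ∧
      Real.sinh r ^ 2 ≤ lorentz w m ^ 2 - lorentz v m ^ 2 ∧
      ∀ z, |lorentz (toHyperboloid z) m| = Real.sinh (infDist z G) := by
  have hS : 0 < Real.sinh r := Real.sinh_pos_iff.2 hr
  set S := Real.sinh r
  obtain ⟨m, hm, hmw, hmdist⟩ : ∃ m, lorentz m m = -1 ∧ 0 ≤ lorentz w m ∧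
      ∀ z, |lorentz (toHyperboloid z) m| = Real.sinh (infDist z G) := by
    obtain ⟨m, hm, hmdist⟩ := hG.exists_normal
    rcases le_total 0 (lorentz w m) with h | h
    · exact ⟨m, hm, h, hmdist⟩
    · refine ⟨-m, ?_, ?_, fun z => ?_⟩
      · rw [lorentz_neg_right, lorentz_comm, lorentz_neg_right, hm, neg_neg]
      · rw [lorentz_neg_right]; linarith
      · rw [lorentz_neg_right, abs_neg, hmdist]
  have hγS (s : ℝ) : S < |Real.cosh s * lorentz w m + Real.sinh s * lorentz v m| := by
    obtain ⟨q, hq, hqs⟩ := hγ_param s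
    rw [← lorentz_smul_left, ← lorentz_smul_left, ← lorentz_add_left, ← hqs, hmdist]
    exact Real.sinh_lt_sinh.2 (hγG q hq)
  have hγS' (s : ℝ) : S ≤ Real.cosh s * lorentz w m + Real.sinh s * lorentz v m := by
    by_contra! hlt
    have hneg : Real.cosh s * lorentz w m + Real.sinh s * lorentz v m ≤ 0 := by
      by_contra! hpos
      have := hγS s
      rw [abs_of_pos hpos] at this
      linarith
    obtain ⟨t, ht⟩ := mem_range_of_exists_le_of_exists_ge
      (f := fun s => Real.cosh s * lorentz w m + Real.sinh s * lorentz v m)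
      (by fun_prop) ⟨s, hneg⟩ ⟨0, by simpa using hmw⟩
    have := hγS t
    simp only at ht
    rw [ht, abs_zero] at this
    linarith
  exact ⟨m, hm, hS.trans_le (by simpa using hγS' 0),
    sq_le_of_forall_le_cosh_sinh hS hγS', hmdist⟩

/-- For every `κ ∈ (0,1)` there is `d_κ > 0` such that: if `c` is a
complete curve of constant curvature `κ` (a connected equidistant curve at distance
`artanh κ` from a geodesic `G`), `γ` a complete geodesic in the non-mean-convex side
of `c`, `D = d(c,γ)` the (realized) distance from `c` to `γ`, `p` the point beyond
`γ` on the common perpendicular, and `γ₁`, `γ₂` the two geodesic rays from `p`,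
orthogonal at `p` (hyperbolic law of cosines: `cosh d(γ₁(s),γ₂(t)) = cosh s cosh t`),
each at bounded distance from `γ` (hence ending at the ideal endpoints of `γ`), then
`d(c, γ₁ ∪ γ₂) ≥ d(c,γ) + d_κ`. -/
theorem stmt18 :
    ∀ κ : ℝ, 0 < κ → κ < 1 → ∃ dκ > 0,
    ∀ (G c γ : Set UpperHalfPlane) (f₁ f₂ : ℝ → UpperHalfPlane)
      (p z₀ w₀ : UpperHalfPlane) (D : ℝ),
      IsGeodesicLine G → IsGeodesicLine γ →
      -- c is a connected curve equidistant from G at distance artanh κ,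
      -- i.e. of constant curvature κ
      (∀ z ∈ c, Metric.infDist z G = artanh κ) → IsConnected c → c.Nonempty →
      -- γ lies in the non-mean-convex side of c
      (∀ w ∈ γ, artanh κ < Metric.infDist w G) →
      -- D is the distance from c to γ, realized at z₀ ∈ c, w₀ ∈ γ
      z₀ ∈ c → w₀ ∈ γ → dist z₀ w₀ = D →
      (∀ z ∈ c, ∀ w ∈ γ, D ≤ dist z w) →
      -- p lies beyond w₀ on the common perpendicular γ' of c and γ
      dist z₀ p = dist z₀ w₀ + dist w₀ p →
      -- γ₁, γ₂ are geodesic rays from p, orthogonal at p,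
      IsRayFrom f₁ p → IsRayFrom f₂ p →
      (∀ s t : ℝ, 0 ≤ s → 0 ≤ t →
        Real.cosh (dist (f₁ s) (f₂ t)) = Real.cosh s * Real.cosh t) →
      -- each ending at an ideal endpoint of γ (bounded distance from γ)
      (∃ Cb : ℝ, ∀ s : ℝ, 0 ≤ s → Metric.infDist (f₁ s) γ ≤ Cb) →
      (∃ Cb : ℝ, ∀ s : ℝ, 0 ≤ s → Metric.infDist (f₂ s) γ ≤ Cb) →
      -- conclusion: d(c, γ₁ ∪ γ₂) ≥ d(c, γ) + d_κ
      ∀ z ∈ c, ∀ s : ℝ, 0 ≤ s →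
        D + dκ ≤ dist z (f₁ s) ∧ D + dκ ≤ dist z (f₂ s) := by
  intro κ hκ0 hκ1
  have hr := artanh_pos hκ0 hκ1
  set r := artanh κ
  have hS : 0 < Real.sinh r := Real.sinh_pos_iff.2 hr
  set S := Real.sinh r
  set ε := S ^ 2 / (8 * (1 + 2 * S ^ 2)) with hε
  have hε0 : 0 < ε := by positivity
  refine ⟨Real.log (1 + ε / 2), Real.log_pos (by linarith), ?_⟩
  intro G c γ f₁ f₂ p z₀ w₀ D hG hγ hc _ _ hγG hz₀ hw₀ hD hDmin hp hf₁ hf₂ horth hb₁ hb₂ z hz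
  have hD0 : 0 < D := by
    rw [← hD, dist_pos]
    rintro rfl
    exact (hγG _ hw₀).ne' (hc _ hz₀)
  have hE : 0 < Real.sinh D := Real.sinh_pos_iff.2 hD0
  have hC : 1 < Real.cosh D := Real.one_lt_cosh.2 hD0.ne'
  obtain ⟨v, hwv, hvv, hγ_param, hγ_mem⟩ := hγ.exists_frame hw₀
  set w := toHyperboloid w₀
  have hww : lorentz w w = 1 := lorentz_toHyperboloid_self w₀
  have hmin (y : UpperHalfPlane) (hy : y ∈ c) :
      Real.cosh D ^ 2 ≤ lorentz (toHyperboloid y) w ^ 2 - lorentz (toHyperboloid y) v ^ 2 := by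
    refine sq_le_of_forall_le_cosh_sinh (Real.cosh_pos D) fun s => ?_
    obtain ⟨q, hq, hqs⟩ := hγ_param s
    rw [← lorentz_smul_right, ← lorentz_smul_right, ← lorentz_add_right, ← hqs,
      lorentz_toHyperboloid, Real.cosh_le_cosh, abs_of_pos hD0, abs_of_nonneg dist_nonneg]
    exact hDmin y hy q hq
  have hz₀w : lorentz (toHyperboloid z₀) w = Real.cosh D := by rw [lorentz_toHyperboloid, hD]
  have hz₀v : lorentz (toHyperboloid z₀) v = 0 := by
    have := hmin z₀ hz₀
    rw [hz₀w] at this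
    exact pow_eq_zero_iff two_ne_zero |>.1 (le_antisymm (by linarith) (sq_nonneg _))
  -- the frame `(w, v, n)`, with `n` pointing from `w₀` to `z₀`
  obtain ⟨n, hn⟩ : ∃ n, n = (Real.sinh D)⁻¹ • (toHyperboloid z₀ - Real.cosh D • w) := ⟨_, rfl⟩
  have hF : IsLorentzFrame w v n := by
    refine ⟨hww, hvv, ?_, hwv, ?_, ?_⟩
    · simp only [hn, lorentz_smul_left, lorentz_smul_right, lorentz_sub_left, lorentz_sub_right,
        hww, hz₀w, lorentz_comm w (toHyperboloid z₀), lorentz_toHyperboloid_self]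
      field_simp
      linarith [Real.cosh_sq D]
    · simp only [hn, lorentz_smul_right, lorentz_sub_right, hww, hz₀w,
        lorentz_comm w (toHyperboloid z₀)]
      ring
    · simp only [hn, lorentz_smul_right, lorentz_sub_right, lorentz_comm v w, hwv, hz₀v,
        lorentz_comm v (toHyperboloid z₀)]
      ring
  have hz₀n : lorentz (toHyperboloid z₀) n = -Real.sinh D := by
    simp only [hn, lorentz_smul_right, lorentz_sub_right, hz₀w, lorentz_toHyperboloid_self]
    field_simp
    linarith [Real.cosh_sq D]
  have hγn (q) (hq : q ∈ γ) : lorentz (toHyperboloid q) n = 0 := by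
    obtain ⟨s, hs⟩ := hγ_mem q hq
    simp [hs, lorentz_add_left, lorentz_smul_left, hF.wn, hF.vn]
  -- the coordinates of `p`
  set a := dist w₀ p with ha
  have ha0 : 0 ≤ a := dist_nonneg
  have hpw : lorentz (toHyperboloid p) w = Real.cosh a := by
    rw [lorentz_toHyperboloid, dist_comm]
  have hpn : lorentz (toHyperboloid p) n = Real.sinh a := by
    simp only [hn, lorentz_smul_right, lorentz_sub_right, hpw, lorentz_toHyperboloid]
    rw [dist_comm, hp, hD, Real.cosh_add]
    field_simp
    ring
  have hpv : lorentz (toHyperboloid p) v = 0 := by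
    have := hF.lorentz_eq (toHyperboloid p) (toHyperboloid p)
    rw [lorentz_toHyperboloid_self, hpw, hpn] at this
    exact pow_eq_zero_iff two_ne_zero |>.1 (by linarith [Real.cosh_sq a])
  obtain ⟨u₁, hpu₁, huu₁, hu₁⟩ := hf₁.exists_direction
  obtain ⟨u₂, hpu₂, huu₂, hu₂⟩ := hf₂.exists_direction
  obtain ⟨Cb₁, hb₁⟩ := hb₁
  obtain ⟨Cb₂, hb₂⟩ := hb₂
  obtain ⟨hun₁, huw₁, huv₁⟩ :=
    IsRayFrom.direction_coords hF ⟨w₀, hw₀⟩ hγn hpw hpv hpn hpu₁ huu₁ hu₁ hb₁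
  obtain ⟨hun₂, huw₂, huv₂⟩ :=
    IsRayFrom.direction_coords hF ⟨w₀, hw₀⟩ hγn hpw hpv hpn hpu₂ huu₂ hu₂ hb₂
  have hu₁₂ : lorentz u₁ u₂ = 0 := by
    have h := horth 1 1 zero_le_one zero_le_one
    rw [← lorentz_toHyperboloid, hu₁ 1 zero_le_one, hu₂ 1 zero_le_one] at h
    simp only [lorentz_add_left, lorentz_add_right, lorentz_smul_left, lorentz_smul_right,
      lorentz_toHyperboloid_self, hpu₂, lorentz_comm u₁ (toHyperboloid p), hpu₁] at h
    have h1 : Real.sinh 1 ^ 2 * lorentz u₁ u₂ = 0 := by linarith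
    exact (mul_eq_zero.1 h1).resolve_left (pow_pos (Real.sinh_pos_iff.2 one_pos) 2).ne'
  have hsa : Real.sinh a = 1 := by
    have h := hF.lorentz_eq u₁ u₂
    rw [hu₁₂, hun₁, hun₂] at h
    have h1 : (Real.cosh a * lorentz u₁ v) * (Real.cosh a * lorentz u₂ v) = -Real.sinh a ^ 2 := by
      linear_combination Real.cosh a ^ 2 * h + Real.cosh a * lorentz u₂ w * huw₁
        - Real.sinh a ^ 2 * huw₂ - Real.sinh a ^ 2 * Real.cosh_sq a
    have h2 : Real.sinh a ^ 4 = 1 := by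
      calc Real.sinh a ^ 4 = (-Real.sinh a ^ 2) ^ 2 := by ring
        _ = 1 := by rw [← h1, mul_pow, huv₁, huv₂, one_mul]
    exact (pow_eq_one_iff_of_nonneg (Real.sinh_nonneg_iff.2 ha0) (by norm_num)).1 h2
  have hk2 : Real.cosh a ^ 2 = 2 := by rw [Real.cosh_sq, hsa]; norm_num
  have hk0 := Real.cosh_pos a
  obtain ⟨m, hm, hμ₀, hμ, hmdist⟩ := hG.exists_normal_toward hr hγ_param hγG
  have hmn := hF.lorentz_eq m m
  rw [hm, lorentz_comm m w, lorentz_comm m v] at hmn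
  have hstrip (y : UpperHalfPlane) (hy : y ∈ c) : lorentz (toHyperboloid y) m ≤ S :=
    (le_abs_self _).trans (by rw [hmdist, hc y hy])
  have hz₀m := hstrip z₀ hz₀
  rw [hF.lorentz_eq, hz₀w, hz₀v, hz₀n, lorentz_comm m w] at hz₀m
  have hzm := hstrip z hz
  rw [hF.lorentz_eq, lorentz_comm m w, lorentz_comm m v] at hzm
  have hzz := hF.lorentz_eq (toHyperboloid z) (toHyperboloid z)
  rw [lorentz_toHyperboloid_self] at hzz
  have hzw : 0 < lorentz (toHyperboloid z) w := by
    rw [lorentz_toHyperboloid]; exact Real.cosh_pos _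
  have hzmin := hmin z hz
  have final (f : ℝ → UpperHalfPlane) (u : ℝ × ℝ × ℝ) (hun : lorentz u n = -Real.sinh a)
      (huw : Real.cosh a * lorentz u w = -Real.sinh a ^ 2)
      (huv : (Real.cosh a * lorentz u v) ^ 2 = 1) (s : ℝ)
      (hu : toHyperboloid (f s) = Real.cosh s • toHyperboloid p + Real.sinh s • u) :
      D + Real.log (1 + ε / 2) ≤ dist z (f s) := by
    obtain ⟨σ, hσ⟩ : ∃ σ, σ = -(Real.cosh a * lorentz u v) := ⟨_, rfl⟩
    have hσ2 : σ ^ 2 = 1 := by rw [hσ, neg_sq, huv]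
    rw [hsa] at hun huw hpn
    have h1 := le_sinh_dist_ray (z := z) hF hk0 hk2 hσ2 hpw hpv hpn hun (by linarith)
      (by linarith) hu
    obtain ⟨h2, h3⟩ := strip_point_bounds (S := S) (C := Real.cosh D) (E := Real.sinh D)
      (μ₀ := lorentz w m) (μ₁ := -σ * lorentz v m) (μ₂ := -lorentz m n)
      (x := lorentz (toHyperboloid z) w) (y := -σ * lorentz (toHyperboloid z) v)
      (ν := -lorentz (toHyperboloid z) n) hS hE hC (by rw [Real.cosh_sq]; ring) hμ₀
      (by linear_combination hμ + lorentz v m ^ 2 * hσ2)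
      (by linear_combination -hmn - lorentz v m ^ 2 * hσ2)
      (by linarith) hzw
      (by linear_combination -hzz - lorentz (toHyperboloid z) v ^ 2 * hσ2)
      (by linarith [Real.cosh_sq D])
      (by linear_combination hzm - lorentz (toHyperboloid z) v * lorentz v m * hσ2)
    rw [← Real.sinh_le_sinh]
    refine (sinh_add_log_le (by positivity)).trans (le_trans ?_ h1)
    have hk : (1 / 2 : ℝ) ≤ (Real.cosh a)⁻¹ := by
      rw [one_div]
      exact inv_anti₀ hk0 (le_of_sq_le_sq (by rw [hk2]; norm_num) zero_le_two)
    have h4 : ε * Real.cosh D ≤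
        lorentz (toHyperboloid z) w + σ * lorentz (toHyperboloid z) v := by linarith
    have h5 : 1 / 2 * (ε * Real.cosh D) ≤ (Real.cosh a)⁻¹ *
        (lorentz (toHyperboloid z) w + σ * lorentz (toHyperboloid z) v) := by
      gcongr
    linarith
  exact fun s hs => ⟨final f₁ u₁ hun₁ huw₁ huv₁ s (hu₁ s hs),
    final f₂ u₂ hun₂ huw₂ huv₂ s (hu₂ s hs)⟩
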